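/- Let a be a non-zero squarefree integer and n a non-zero integer. If the equation x² − a y² = n has a solution with x, y in Q_p for every prime p and a solution with x, y in R, then it has a solution with x, y in Q. -/

import Mathlib

/-!
The affine conic has a point over a field `K` (of characteristic not two, with `a ≠ 0`) exactly when
the ternary form `x² - a y² - n z²` is isotropic over `K`, so it suffices to prove the Hasse
principle for these forms, where `a` and `n` may be taken to be integers. This is Legendre's
descent: multiplicativity of the norm `t² - a s²` shows that `n` may be replaced by `c` whenever
`n c` is such a norm; in particular square factors of `n` can be removed. If `|a| ≤ |n|` and `n` is
squarefree, then isotropy over `ℚ_p` for every `p ∣ n` makes `a` a square modulo each such `p`,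
hence modulo `n`; a square root `t` with `|t| ≤ |n| / 2` gives `n c = t² - a` with `|c| < |n|`. The
descent stops at `|a|, |n| ≤ 1`, where the only anisotropic form `x² + y² + z²` is excluded by the
real place.
-/

section Field

variable {K : Type*} [Field K] {a b c s t : K}

/-- The form `x² - a y² - b z²` is isotropic over `K`; for `a, b ≠ 0` and `K` of characteristic not
two this says that the Hilbert symbol `(a, b)` is trivial. -/
def TernaryIsotropic (a b : K) : Prop :=
  ∃ x y z : K, (x, y, z) ≠ 0 ∧ x ^ 2 = a * y ^ 2 + b * z ^ 2

namespace TernaryIsotropic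

theorem symm (h : TernaryIsotropic a b) : TernaryIsotropic b a := by
  obtain ⟨x, y, z, hne, h⟩ := h
  refine ⟨x, z, y, fun h0 => hne ?_, by rw [h, add_comm]⟩
  simp_all only [Prod.mk_eq_zero, and_self]

theorem of_isSquare_left (ha : IsSquare a) (b : K) : TernaryIsotropic a b := by
  obtain ⟨r, rfl⟩ := ha
  exact ⟨r, 1, 0, by simp, by ring⟩

theorem of_isSquare_right (a : K) (hb : IsSquare b) : TernaryIsotropic a b :=
  (of_isSquare_left hb a).symm

theorem of_mul_eq_sq_sub_mul_sq (h : TernaryIsotropic a b) (hb : b ≠ 0)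
    (hbc : b * c = t ^ 2 - a * s ^ 2) : TernaryIsotropic a c := by
  obtain ⟨x, y, z, hne, h⟩ := h
  rcases eq_or_ne z 0 with rfl | hz
  · exact ⟨x, y, 0, hne, by rw [h]; ring⟩
  · refine ⟨x * t + a * y * s, x * s + y * t, b * z, by simp [hb, hz], ?_⟩
    -- `(x² - a y²) (t² - a s²)` is the norm of `(x + y √a) (t + s √a)`.
    linear_combination (t ^ 2 - a * s ^ 2) * h - b * z ^ 2 * hbc

theorem of_exists_sq_sub_mul_sq_eq (h : ∃ x y : K, x ^ 2 - a * y ^ 2 = b) :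
    TernaryIsotropic a b := by
  obtain ⟨x, y, h⟩ := h
  exact ⟨x, y, 1, by simp, by linear_combination h⟩

theorem exists_sq_sub_mul_sq_eq [NeZero (2 : K)] (ha : a ≠ 0) (h : TernaryIsotropic a b) :
    ∃ x y : K, x ^ 2 - a * y ^ 2 = b := by
  obtain ⟨x, y, z, hne, h⟩ := h
  rcases eq_or_ne z 0 with rfl | hz
  · have hy : y ≠ 0 := by
      rintro rfl
      simp_all
    have ha_sq : a = (x / y) ^ 2 := by
      field_simp
      linear_combination -h
    have hr : x / y ≠ 0 := by
      intro hr
      simp_all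
    have h2 : (2 : K) ≠ 0 := two_ne_zero
    -- The norm form splits into two linear factors, to be given the values `b` and `1`.
    refine ⟨(b + 1) / 2, (b - 1) / 2 / (x / y), ?_⟩
    rw [ha_sq, ← mul_pow, mul_div_cancel₀ _ hr]
    field_simp
    ring
  · refine ⟨x / z, y / z, ?_⟩
    field_simp
    linear_combination h

theorem nonneg_or_nonneg [LinearOrder K] [IsStrictOrderedRing K] (h : TernaryIsotropic a b) :
    0 ≤ a ∨ 0 ≤ b := by
  by_contra! hneg
  obtain ⟨x, y, z, hne, h⟩ := h
  have hay : a * y ^ 2 ≤ 0 := mul_nonpos_of_nonpos_of_nonneg hneg.1.le (sq_nonneg y)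
  have hbz : b * z ^ 2 ≤ 0 := mul_nonpos_of_nonpos_of_nonneg hneg.2.le (sq_nonneg z)
  have hx : x ^ 2 = 0 := by linarith [sq_nonneg x]
  have hy : a * y ^ 2 = 0 := by linarith
  have hz : b * z ^ 2 = 0 := by linarith
  simp_all [hneg.1.ne, hneg.2.ne]

end TernaryIsotropic

end Field

theorem isSquare_of_isSquare_algebraMap {R K : Type*} [CommRing R] [IsIntegrallyClosed R] [Field K]
    [Algebra R K] [IsFractionRing R K] {r : R} (h : IsSquare (algebraMap R K r)) : IsSquare r := by
  obtain ⟨x, hx⟩ := h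
  obtain ⟨v, rfl⟩ := IsIntegrallyClosed.exists_algebraMap_eq_of_isIntegral_pow (R := R) two_pos
    (by rw [sq, ← hx]; exact isIntegral_algebraMap : IsIntegral R (x ^ 2))
  exact ⟨v, IsFractionRing.injective R K (by rw [hx, map_mul])⟩

theorem dvd_of_irreducible_of_not_isUnit {M : Type*} [Monoid M] [PreValuationRing M] {ϖ r : M}
    (hϖ : Irreducible ϖ) (hr : ¬IsUnit r) : ϖ ∣ r := by
  rcases ValuationRing.dvd_total ϖ r with h | h
  · exact h
  · exact ((hϖ.dvd_iff.1 h).resolve_left hr).dvd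

section ValuationRing

open IsLocalRing

variable {R : Type*} [CommRing R] [IsDomain R] [ValuationRing R]

theorem isSquare_residue_of_isSquare_mul_sq_add {a b w : R} (hb : Irreducible b)
    (h : IsSquare (a * w ^ 2 + b)) : IsSquare (residue R a) := by
  obtain ⟨v, h⟩ := h
  have hres : residue R a * residue R w ^ 2 = residue R v * residue R v := by
    simpa [(residue_eq_zero_iff b).2 hb.not_isUnit] using congrArg (residue R) h
  have hw : IsUnit w := by
    by_contra hw
    have hv : ¬IsUnit v := by
      rw [← residue_ne_zero_iff_isUnit, not_not] at hw ⊢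
      simpa [hw] using hres.symm
    obtain ⟨w', rfl⟩ := dvd_of_irreducible_of_not_isUnit hb hw
    obtain ⟨v', rfl⟩ := dvd_of_irreducible_of_not_isUnit hb hv
    have hunit : b * (v' ^ 2 - a * w' ^ 2) = 1 :=
      mul_left_cancel₀ hb.ne_zero (by linear_combination -h)
    exact hb.not_isUnit (IsUnit.of_mul_eq_one _ hunit)
  have hw0 := (residue_ne_zero_iff_isUnit w).2 hw
  exact ⟨residue R v / residue R w, by field_simp; rw [hres, sq]⟩

variable {K : Type*} [Field K] [Algebra R K] [IsFractionRing R K]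

variable (R) in
theorem exists_eq_algebraMap_mul_or_exists_eq_algebraMap_mul (y z : K) :
    (∃ w : R, y = algebraMap R K w * z) ∨ ∃ w : R, z = algebraMap R K w * y := by
  rcases eq_or_ne y 0 with rfl | hy
  · exact .inl ⟨0, by simp⟩
  rcases eq_or_ne z 0 with rfl | hz
  · exact .inr ⟨0, by simp⟩
  rcases ValuationRing.isInteger_or_isInteger R (y / z) with ⟨w, hw⟩ | ⟨w, hw⟩
  · exact .inl ⟨w, by rw [hw, div_mul_cancel₀ y hz]⟩
  · exact .inr ⟨w, by rw [hw, inv_div, div_mul_cancel₀ z hy]⟩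

theorem TernaryIsotropic.isSquare_residue {a b : R} (hb : Irreducible b)
    (h : TernaryIsotropic (algebraMap R K a) (algebraMap R K b)) : IsSquare (residue R a) := by
  obtain ⟨x, y, z, hne, h⟩ := h
  have hb0 : residue R b = 0 := (residue_eq_zero_iff b).2 hb.not_isUnit
  rcases exists_eq_algebraMap_mul_or_exists_eq_algebraMap_mul R y z with ⟨w, rfl⟩ | ⟨w, rfl⟩
  · have hz : z ≠ 0 := by
      rintro rfl
      simp_all
    have hsq : IsSquare (a * w ^ 2 + b) := by
      refine isSquare_of_isSquare_algebraMap (K := K) ⟨x / z, ?_⟩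
      rw [div_mul_div_comm, ← sq, ← sq, h, map_add, map_mul, map_pow]
      field_simp
    exact isSquare_residue_of_isSquare_mul_sq_add hb hsq
  · have hy : y ≠ 0 := by
      rintro rfl
      simp_all
    have hsq : IsSquare (a + b * w ^ 2) := by
      refine isSquare_of_isSquare_algebraMap (K := K) ⟨x / y, ?_⟩
      rw [div_mul_div_comm, ← sq, ← sq, h, map_add, map_mul, map_pow]
      field_simp
    simpa [hb0] using hsq.map (residue R)

end ValuationRing

section Padic

variable {p : ℕ} [Fact p.Prime]

theorem irreducible_intCast_padicInt {b : ℤ} (hpb : (p : ℤ) ∣ b) (hppb : ¬(p : ℤ) * p ∣ b) :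
    Irreducible (b : ℤ_[p]) := by
  obtain ⟨c, rfl⟩ := hpb
  have hc : IsUnit (c : ℤ_[p]) := by
    rw [← not_not (a := IsUnit _), PadicInt.not_isUnit_iff, PadicInt.norm_intCast_lt_one_iff]
    exact mt (mul_dvd_mul_left _) hppb
  push_cast
  exact (irreducible_mul_isUnit hc).2 PadicInt.irreducible_p

theorem TernaryIsotropic.isSquare_zmod {a b : ℤ} (hpb : (p : ℤ) ∣ b) (hppb : ¬(p : ℤ) * p ∣ b)
    (h : TernaryIsotropic (a : ℚ_[p]) (b : ℚ_[p])) : IsSquare (a : ZMod p) := by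
  have hres : IsSquare (IsLocalRing.residue ℤ_[p] a) :=
    TernaryIsotropic.isSquare_residue (K := ℚ_[p])
      (irreducible_intCast_padicInt hpb hppb) (by simpa using h)
  simpa using hres.map PadicInt.residueField

end Padic

theorem isSquare_intCast_zmod_mul {m n : ℕ} (hmn : m.Coprime n) {a : ℤ}
    (hm : IsSquare (a : ZMod m)) (hn : IsSquare (a : ZMod n)) : IsSquare (a : ZMod (m * n)) := by
  have hprod : IsSquare (a : ZMod m × ZMod n) := by
    obtain ⟨x, hx⟩ := hm
    obtain ⟨y, hy⟩ := hn
    exact ⟨(x, y), Prod.ext (by simpa using hx) (by simpa using hy)⟩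
  simpa using hprod.map (ZMod.chineseRemainder hmn).symm

theorem isSquare_intCast_zmod_of_squarefree {n : ℕ} (hn : Squarefree n) {a : ℤ}
    (h : ∀ p : ℕ, p.Prime → p ∣ n → IsSquare (a : ZMod p)) : IsSquare (a : ZMod n) := by
  induction n using induction_on_primes with
  | zero => exact absurd hn not_squarefree_zero
  | one => exact ⟨0, Subsingleton.elim _ _⟩
  | prime_mul p n hp ih =>
    exact isSquare_intCast_zmod_mul (Nat.coprime_of_squarefree_mul hn)
      (h p hp (dvd_mul_right p n))
      (ih hn.of_mul_right fun q hq hqn => h q hq (hqn.mul_left p))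

/-- The local hypothesis of the Hasse principle for `x² - a y² - b z²`: isotropy over every
completion of `ℚ`. -/
def EverywhereLocallyIsotropic (a b : ℚ) : Prop :=
  TernaryIsotropic (a : ℝ) (b : ℝ) ∧
    ∀ (p : ℕ) [Fact p.Prime], TernaryIsotropic (a : ℚ_[p]) (b : ℚ_[p])

namespace EverywhereLocallyIsotropic

theorem symm {a b : ℚ} (h : EverywhereLocallyIsotropic a b) : EverywhereLocallyIsotropic b a :=
  ⟨h.1.symm, fun p _ => (h.2 p).symm⟩

theorem of_mul_eq_sq_sub_mul_sq {a b c t s : ℚ} (h : EverywhereLocallyIsotropic a b) (hb : b ≠ 0)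
    (hbc : b * c = t ^ 2 - a * s ^ 2) : EverywhereLocallyIsotropic a c :=
  ⟨h.1.of_mul_eq_sq_sub_mul_sq (t := t) (s := s) (mod_cast hb) (mod_cast hbc),
    fun p _ => (h.2 p).of_mul_eq_sq_sub_mul_sq (t := t) (s := s) (mod_cast hb) (mod_cast hbc)⟩

theorem isSquare_zmod {a b : ℤ} (h : EverywhereLocallyIsotropic a b) (hb : Squarefree b) :
    IsSquare (a : ZMod b.natAbs) :=
  isSquare_intCast_zmod_of_squarefree (Int.squarefree_natAbs.2 hb) fun p hp hpb =>
    have : Fact p.Prime := ⟨hp⟩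
    have hppb : ¬(p : ℤ) * p ∣ b := fun hdvd =>
      (Nat.prime_iff_prime_int.1 hp).not_isUnit (hb _ hdvd)
    TernaryIsotropic.isSquare_zmod (Int.natCast_dvd.2 hpb) hppb (by simpa using h.2 p)

end EverywhereLocallyIsotropic

theorem exists_mul_eq_sq_sub_of_isSquare_zmod {a b : ℤ} (hb : b ≠ 0)
    (h : IsSquare (a : ZMod b.natAbs)) :
    ∃ c t : ℤ, b * c = t ^ 2 - a ∧ 2 * t.natAbs ≤ b.natAbs := by
  obtain ⟨r, hr⟩ := h
  have hdvd : b ∣ r.valMinAbs ^ 2 - a := by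
    rw [← Int.natAbs_dvd, ← ZMod.intCast_zmod_eq_zero_iff_dvd]
    simp [hr, sq]
  obtain ⟨c, hc⟩ := hdvd
  have : NeZero b.natAbs := ⟨Int.natAbs_ne_zero.2 hb⟩
  have hle := ZMod.natAbs_valMinAbs_le r
  exact ⟨c, r.valMinAbs, hc.symm, by lia⟩

theorem exists_natAbs_lt_mul_eq_sq_sub_of_isSquare_zmod {a b : ℤ} (ha : ¬IsSquare a)
    (hb : 1 < b.natAbs) (hab : a.natAbs ≤ b.natAbs) (h : IsSquare (a : ZMod b.natAbs)) :
    ∃ c t : ℤ, c ≠ 0 ∧ c.natAbs < b.natAbs ∧ b * c = t ^ 2 - a := by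
  obtain ⟨c, t, hbc, ht⟩ := exists_mul_eq_sq_sub_of_isSquare_zmod (by lia) h
  refine ⟨c, t, ?_, ?_, hbc⟩
  · rintro rfl
    exact ha ⟨t, by linear_combination hbc⟩
  · have hle : b.natAbs * c.natAbs ≤ t.natAbs ^ 2 + a.natAbs := by
      rw [← Int.natAbs_mul, hbc, ← Int.natAbs_pow]
      exact Int.natAbs_sub_le _ _
    have ht_sq : 4 * t.natAbs ^ 2 ≤ b.natAbs ^ 2 := by
      simpa [mul_pow] using Nat.pow_le_pow_left ht 2
    by_contra! hge
    have hb_sq : b.natAbs ^ 2 ≤ b.natAbs * c.natAbs := by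
      rw [sq]
      exact Nat.mul_le_mul_left _ hge
    nlinarith

theorem exists_natAbs_lt_mul_eq_sq_of_not_squarefree {b : ℤ} (hb : b ≠ 0) (h : ¬Squarefree b) :
    ∃ c t : ℤ, c ≠ 0 ∧ c.natAbs < b.natAbs ∧ b * c = t ^ 2 := by
  simp only [Squarefree, not_forall] at h
  obtain ⟨u, ⟨c, rfl⟩, hu⟩ := h
  have hu0 : u ≠ 0 := by rintro rfl; simp at hb
  have hc0 : c ≠ 0 := by rintro rfl; simp at hb
  refine ⟨c, u * c, hc0, ?_, by ring⟩
  have hu2 : 1 < u.natAbs := by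
    have := mt Int.isUnit_iff_natAbs_eq.2 hu
    lia
  have hc : 0 < c.natAbs := Int.natAbs_pos.2 hc0
  rw [Int.natAbs_mul, Int.natAbs_mul]
  exact lt_mul_of_one_lt_left hc (one_lt_mul'' hu2 hu2)

theorem EverywhereLocallyIsotropic.exists_natAbs_lt_mul_eq_sq_sub_mul_sq {a b : ℤ}
    (h : EverywhereLocallyIsotropic a b) (ha : ¬IsSquare a) (hb : 1 < b.natAbs)
    (hab : a.natAbs ≤ b.natAbs) :
    ∃ c t s : ℤ, c ≠ 0 ∧ c.natAbs < b.natAbs ∧ b * c = t ^ 2 - a * s ^ 2 := by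
  by_cases hsq : Squarefree b
  · obtain ⟨c, t, hc, hlt, hbc⟩ :=
      exists_natAbs_lt_mul_eq_sq_sub_of_isSquare_zmod ha hb hab (h.isSquare_zmod hsq)
    exact ⟨c, t, 1, hc, hlt, by rw [hbc]; ring⟩
  · obtain ⟨c, t, hc, hlt, hbc⟩ := exists_natAbs_lt_mul_eq_sq_of_not_squarefree (by lia) hsq
    exact ⟨c, t, 0, hc, hlt, by rw [hbc]; ring⟩

theorem EverywhereLocallyIsotropic.ternaryIsotropic_intCast {a b : ℤ}
    (h : EverywhereLocallyIsotropic a b) : TernaryIsotropic (a : ℚ) (b : ℚ) := by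
  induction hN : a.natAbs + b.natAbs using Nat.strong_induction_on generalizing a b with
  | _ N ih =>
  wlog hab : a.natAbs ≤ b.natAbs generalizing a b
  · exact (this h.symm (by lia) (by lia)).symm
  by_cases ha : IsSquare a
  · exact .of_isSquare_left (ha.map (Int.castRingHom ℚ)) b
  rcases lt_or_ge 1 b.natAbs with hb | hb
  · obtain ⟨c, t, s, hc, hlt, hbc⟩ := h.exists_natAbs_lt_mul_eq_sq_sub_mul_sq ha hb hab
    have hbcQ : (b : ℚ) * c = t ^ 2 - a * s ^ 2 := mod_cast hbc
    have hb0 : (b : ℚ) ≠ 0 := by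
      rw [Int.cast_ne_zero]
      lia
    have hac := ih _ (by lia) (h.of_mul_eq_sq_sub_mul_sq hb0 hbcQ) rfl
    exact hac.of_mul_eq_sq_sub_mul_sq (mod_cast hc) (by rw [mul_comm, hbcQ])
  · have isSquare_of_nonneg {m : ℤ} (hm : 0 ≤ m) (hm1 : m.natAbs ≤ 1) : IsSquare m := by
      obtain rfl | rfl : m = 0 ∨ m = 1 := by lia
      exacts [.zero, .one]
    have hreal : 0 ≤ a ∨ 0 ≤ b := by simpa using h.1.nonneg_or_nonneg
    rcases hreal with ha_nonneg | hb_nonneg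
    · exact absurd (isSquare_of_nonneg ha_nonneg (hab.trans hb)) ha
    · exact .of_isSquare_right (a : ℚ)
        ((isSquare_of_nonneg hb_nonneg hb).map (Int.castRingHom ℚ))

theorem EverywhereLocallyIsotropic.ternaryIsotropic_of_forall_intCast {a b : ℚ}
    (h : EverywhereLocallyIsotropic a b)
    (hint : ∀ m : ℤ, EverywhereLocallyIsotropic a m → TernaryIsotropic a (m : ℚ)) :
    TernaryIsotropic a b := by
  rcases eq_or_ne b 0 with rfl | hb
  · exact .of_isSquare_right a .zero
  have hbm : b * (b.num * b.den : ℤ) = b.num ^ 2 - a * 0 ^ 2 := by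
    push_cast
    linear_combination (b.num : ℚ) * b.mul_den_eq_num
  have hm : ((b.num * b.den : ℤ) : ℚ) ≠ 0 := by simp [hb]
  exact (hint _ (h.of_mul_eq_sq_sub_mul_sq hb hbm)).of_mul_eq_sq_sub_mul_sq hm
    (by rw [mul_comm, hbm])

theorem EverywhereLocallyIsotropic.ternaryIsotropic {a b : ℚ}
    (h : EverywhereLocallyIsotropic a b) : TernaryIsotropic a b :=
  h.ternaryIsotropic_of_forall_intCast fun _ hm =>
    (hm.symm.ternaryIsotropic_of_forall_intCast fun _ hk => hk.ternaryIsotropic_intCast).symm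

theorem stmt_16_general (a n : ℚ) (ha : a ≠ 0)
    (hloc : ∀ (p : ℕ) [Fact p.Prime], ∃ x y : ℚ_[p], x ^ 2 - (a : ℚ_[p]) * y ^ 2 = (n : ℚ_[p]))
    (hreal : ∃ x y : ℝ, x ^ 2 - (a : ℝ) * y ^ 2 = (n : ℝ)) :
    ∃ x y : ℚ, x ^ 2 - a * y ^ 2 = n :=
  have hlocal : EverywhereLocallyIsotropic a n :=
    ⟨.of_exists_sq_sub_mul_sq_eq hreal, fun p _ => .of_exists_sq_sub_mul_sq_eq (hloc p)⟩
  hlocal.ternaryIsotropic.exists_sq_sub_mul_sq_eq ha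

theorem stmt_16 (a : ℤ) (ha0 : a ≠ 0) (ha : Squarefree a) (n : ℤ) (hn : n ≠ 0)
    (hloc : ∀ (p : ℕ) [Fact p.Prime], ∃ x y : ℚ_[p], x ^ 2 - (a : ℚ_[p]) * y ^ 2 = (n : ℚ_[p]))
    (hreal : ∃ x y : ℝ, x ^ 2 - (a : ℝ) * y ^ 2 = (n : ℝ)) :
    ∃ x y : ℚ, x ^ 2 - (a : ℚ) * y ^ 2 = (n : ℚ) :=
  stmt_16_general a n (mod_cast ha0) (by simpa using hloc) (by simpa using hreal)
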